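/- Let A, B ⊆ ℝ² be Lebesgue-measurable sets with finite positive measure, let F_{A,B}(r) = (λ₂×λ₂){(x,y) ∈ A×B : |x−y| < r} / (λ₂(A)·λ₂(B)), and define g(s) = ∫₀^{2π} λ₂(A ∩ (B + s(cos θ, sin θ))) dθ. If g is continuous at a point r₀ > 0, then F_{A,B} is differentiable at r₀ with derivative f(r₀) = r₀ · g(r₀) / (λ₂(A)·λ₂(B)). That is, the PDF of the distance between two independent uniform points of A and B is f(r) = (r/(λ₂(A)·λ₂(B))) ∫₀^{2π} λ₂(A ∩ (B + r(cos θ, sin θ))) dθ. -/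

import Mathlib

open MeasureTheory Real Set
open scoped ENNReal

/-- The plane `ℝ²` with the Euclidean norm and 2-dimensional Lebesgue measure. -/
abbrev Plane : Type := EuclideanSpace ℝ (Fin 2)

/-- The overlap area of `A` with `B + v`. -/
noncomputable def overlap (A B : Set Plane) (v : Plane) : ℝ≥0∞ :=
  volume (A ∩ (fun x : Plane => x - v) ⁻¹' B)

lemma overlap_eq (A B : Set Plane) (v : Plane) :
    volume (A ∩ ((fun x : Plane => x + v) '' B)) = overlap A B v := by
  unfold overlap
  congr 2
  ext x
  simp only [mem_image, mem_preimage]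
  constructor
  · rintro ⟨y, hy, rfl⟩
    simpa using hy
  · intro h
    exact ⟨x - v, h, by simp⟩

lemma overlap_le (A B : Set Plane) (v : Plane) : overlap A B v ≤ volume A :=
  measure_mono inter_subset_left

lemma measurable_overlap {A B : Set Plane} (hA : MeasurableSet A) (hB : MeasurableSet B) :
    Measurable (overlap A B) := by
  have hS : MeasurableSet {p : Plane × Plane | p.2 ∈ A ∧ p.2 - p.1 ∈ B} :=
    (measurable_snd hA).inter ((measurable_snd.sub measurable_fst) hB)
  exact measurable_measure_prodMk_left hS

/-- Step 1: the product measure as an integral of the overlap over the ball. -/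
lemma prod_measure_eq {A B : Set Plane} (hA : MeasurableSet A) (hB : MeasurableSet B) (r : ℝ) :
    ((volume : Measure Plane).prod (volume : Measure Plane))
        {p : Plane × Plane | p.1 ∈ A ∧ p.2 ∈ B ∧ dist p.1 p.2 < r} =
      ∫⁻ v : Plane, (Metric.ball (0 : Plane) r).indicator (overlap A B) v := by
  have hS : MeasurableSet {p : Plane × Plane | p.1 ∈ A ∧ p.2 ∈ B ∧ dist p.1 p.2 < r} :=
    (measurable_fst hA).inter ((measurable_snd hB).inter
      (measurableSet_lt (measurable_fst.dist measurable_snd) measurable_const))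
  have hT : MeasurableSet {p : Plane × Plane | p.1 ∈ A ∧ p.1 - p.2 ∈ B ∧ ‖p.2‖ < r} :=
    (measurable_fst hA).inter (((measurable_fst.sub measurable_snd) hB).inter
      (measurableSet_lt measurable_snd.norm measurable_const))
  have h1 : ((volume : Measure Plane).prod (volume : Measure Plane))
        {p : Plane × Plane | p.1 ∈ A ∧ p.2 ∈ B ∧ dist p.1 p.2 < r} =
      ((volume : Measure Plane).prod (volume : Measure Plane))
        {p : Plane × Plane | p.1 ∈ A ∧ p.1 - p.2 ∈ B ∧ ‖p.2‖ < r} := by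
    rw [Measure.prod_apply hS, Measure.prod_apply hT]
    refine lintegral_congr fun x => ?_
    rw [← lintegral_indicator_one (measurable_prodMk_left hS),
      ← lintegral_indicator_one (measurable_prodMk_left hT),
      ← lintegral_sub_left_eq_self _ x]
    refine lintegral_congr fun v => ?_
    have hd : dist x (x - v) = ‖v‖ := by rw [dist_eq_norm, sub_sub_cancel]
    have hiff : (x - v ∈ Prod.mk x ⁻¹' {p : Plane × Plane | p.1 ∈ A ∧ p.2 ∈ B ∧ dist p.1 p.2 < r}) ↔
        (v ∈ Prod.mk x ⁻¹' {p : Plane × Plane | p.1 ∈ A ∧ p.1 - p.2 ∈ B ∧ ‖p.2‖ < r}) := by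
      simp only [mem_preimage, mem_setOf_eq]
      rw [hd]
    classical
    rw [indicator_apply, indicator_apply]
    exact if_congr hiff rfl rfl
  rw [h1, Measure.prod_apply_symm hT]
  refine lintegral_congr fun v => ?_
  by_cases hv : ‖v‖ < r
  · rw [indicator_of_mem (by simpa using hv)]
    unfold overlap
    congr 1
    ext x
    simp [hv]
  · rw [indicator_of_notMem (by simpa using hv)]
    simp [hv]

/-- Polar coordinates on `Plane`. -/
lemma lintegral_plane_polar (f : Plane → ℝ≥0∞) :
    ∫⁻ v, f v = ∫⁻ p in Ioi (0:ℝ) ×ˢ Ioo (-π) π,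
      ENNReal.ofReal p.1 * f !₂[p.1 * Real.cos p.2, p.1 * Real.sin p.2] := by
  have h1 := (PiLp.volume_preserving_toLp (Fin 2)).lintegral_comp_emb
    (MeasurableEquiv.toLp 2 (Fin 2 → ℝ)).measurableEmbedding f
  have h2 := ((volume_preserving_finTwoArrow ℝ).symm).lintegral_comp_emb
    (MeasurableEquiv.finTwoArrow).symm.measurableEmbedding
    (fun w : Fin 2 → ℝ => f (WithLp.toLp 2 w))
  rw [← h1, ← h2, ← lintegral_comp_polarCoord_symm]
  rfl

lemma measurable_polar : Measurable (fun p : ℝ × ℝ =>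
    (!₂[p.1 * Real.cos p.2, p.1 * Real.sin p.2] : Plane)) := by
  have : Continuous (fun p : ℝ × ℝ =>
    (!₂[p.1 * Real.cos p.2, p.1 * Real.sin p.2] : Plane)) := by
    refine (PiLp.continuous_toLp 2 _).comp (continuous_pi fun i => ?_)
    fin_cases i <;> simp <;> fun_prop
  exact this.measurable

lemma norm_polar (s θ : ℝ) (hs : 0 < s) :
    ‖(!₂[s * Real.cos θ, s * Real.sin θ] : Plane)‖ = s := by
  rw [EuclideanSpace.norm_eq]
  simp only [Fin.sum_univ_two, Real.norm_eq_abs, sq_abs]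
  simp only [Matrix.cons_val_zero, Matrix.cons_val_one]
  rw [show (s * Real.cos θ) ^ 2 + (s * Real.sin θ) ^ 2 = s ^ 2 by
    linear_combination s ^ 2 * Real.cos_sq_add_sin_sq θ]
  exact Real.sqrt_sq hs.le

/-- The angular integral of the overlap. -/
noncomputable def ang (A B : Set Plane) (s : ℝ) : ℝ≥0∞ :=
  ∫⁻ θ in Ioo (-π) π, overlap A B !₂[s * Real.cos θ, s * Real.sin θ]

lemma measurable_ang {A B : Set Plane} (hA : MeasurableSet A) (hB : MeasurableSet B) :
    Measurable (ang A B) :=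
  Measurable.lintegral_prod_right' (ν := volume.restrict (Ioo (-π) π))
    ((measurable_overlap hA hB).comp measurable_polar)

lemma ang_lt_top {A : Set Plane} (B : Set Plane) (hA : volume A < ⊤) (s : ℝ) : 
    ang A B s ≤ volume A * ENNReal.ofReal (2 * π) := by
  calc ang A B s ≤ ∫⁻ θ in Ioo (-π) π, volume A := lintegral_mono fun θ => overlap_le _ _ _
    _ = _ := by
      rw [setLIntegral_const, Real.volume_Ioo]
      congr 2
      ring

lemma prod_measure_polar {A B : Set Plane} (hA : MeasurableSet A) (hB : MeasurableSet B) (r : ℝ) :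
    ((volume : Measure Plane).prod (volume : Measure Plane))
        {p : Plane × Plane | p.1 ∈ A ∧ p.2 ∈ B ∧ dist p.1 p.2 < r} =
      ∫⁻ s in Ioo 0 r, ENNReal.ofReal s * ang A B s := by
  have hm : Measurable (fun p : ℝ × ℝ => ENNReal.ofReal p.1 *
      (Metric.ball (0 : Plane) r).indicator (overlap A B)
        !₂[p.1 * Real.cos p.2, p.1 * Real.sin p.2]) :=
    (ENNReal.measurable_ofReal.comp measurable_fst).mul
      (((measurable_overlap hA hB).indicator Metric.isOpen_ball.measurableSet).comp measurable_polar)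
  rw [prod_measure_eq hA hB, lintegral_plane_polar, Measure.volume_eq_prod,
    ← Measure.prod_restrict, lintegral_prod _ hm.aemeasurable,
    show Ioo 0 r = Iio r ∩ Ioi 0 by ext; simp [and_comm],
    ← Measure.restrict_restrict measurableSet_Iio, ← lintegral_indicator measurableSet_Iio]
  refine setLIntegral_congr_fun measurableSet_Ioi fun s hs => ?_
  have hs : 0 < s := hs
  by_cases hsr : s < r
  · rw [indicator_of_mem (by simpa using hsr)]
    unfold ang
    rw [← lintegral_const_mul' _ _ ENNReal.ofReal_ne_top]
    refine lintegral_congr fun θ => ?_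
    rw [indicator_of_mem]
    simpa [norm_polar s θ hs] using hsr
  · rw [indicator_of_notMem (by simpa using hsr)]
    rw [lintegral_eq_zero_iff']
    · refine Filter.Eventually.of_forall fun θ => ?_
      simp only [Pi.zero_apply]
      rw [indicator_of_notMem, mul_zero]
      simpa [norm_polar s θ hs] using hsr
    · exact (hm.comp measurable_prodMk_left).aemeasurable

lemma ang_toReal {A B : Set Plane} (hA : MeasurableSet A) (hB : MeasurableSet B)
    (hAfin : volume A < ⊤) (s : ℝ) :
    ∫ θ in (0:ℝ)..(2 * π), (overlap A B !₂[s * Real.cos θ, s * Real.sin θ]).toReal =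
      (ang A B s).toReal := by
  have hp : Function.Periodic
      (fun θ : ℝ => (overlap A B !₂[s * Real.cos θ, s * Real.sin θ]).toReal) (2 * π) := by
    intro θ
    simp only [Real.cos_add_two_pi, Real.sin_add_two_pi]
  have h := hp.intervalIntegral_add_eq 0 (-π)
  rw [zero_add, show -π + 2 * π = π by ring] at h
  rw [h, intervalIntegral.integral_of_le (by linarith [Real.pi_pos]),
    integral_Ioc_eq_integral_Ioo]
  unfold ang
  refine integral_toReal ?_ ?_
  · exact (((measurable_overlap hA hB).comp measurable_polar).comp
      measurable_prodMk_left).aemeasurable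
  · exact Filter.Eventually.of_forall fun θ => (overlap_le _ _ _).trans_lt hAfin

/-- **PDF form of the distance-distribution theorem (paper's Theorem 2).**
If `A, B ⊆ ℝ²` are measurable with finite positive Lebesgue measure, `F` is the CDF of the
distance between independent uniform points of `A` and `B`, and
`g s = ∫₀^{2π} λ₂(A ∩ (B + s(cos θ, sin θ))) dθ` is continuous at `r₀ > 0`, then `F` is
differentiable at `r₀` with derivative `r₀ · g r₀ / (λ₂(A)·λ₂(B))`. -/
theorem distance_pdf_polar_form
    (A B : Set Plane) (hAm : MeasurableSet A) (hBm : MeasurableSet B)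
    (hA0 : 0 < volume A) (hAfin : volume A < ⊤)
    (hB0 : 0 < volume B) (hBfin : volume B < ⊤)
    (F : ℝ → ℝ)
    (hF : ∀ r : ℝ, F r =
      (((volume : Measure Plane).prod (volume : Measure Plane))
        {p : Plane × Plane | p.1 ∈ A ∧ p.2 ∈ B ∧ dist p.1 p.2 < r}).toReal /
      ((volume A).toReal * (volume B).toReal))
    (g : ℝ → ℝ)
    (hg : ∀ s : ℝ, g s =
      ∫ θ in (0:ℝ)..(2 * π),
        (volume (A ∩ ((fun x : Plane =>
          x + (show Plane from !₂[s * Real.cos θ, s * Real.sin θ])) '' B))).toReal)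
    (r₀ : ℝ) (hr₀ : 0 < r₀) (hcont : ContinuousAt g r₀) :
    HasDerivAt F (r₀ * g r₀ / ((volume A).toReal * (volume B).toReal)) r₀ := by
  have hgs : ∀ s, g s = (ang A B s).toReal := by
    intro s
    rw [hg, ← ang_toReal hAm hBm hAfin]
    refine intervalIntegral.integral_congr fun θ _ => ?_
    simp only [overlap_eq]
  have hgm : Measurable g := by
    rw [show g = fun s => (ang A B s).toReal from funext hgs]
    exact (measurable_ang hAm hBm).ennreal_toReal
  have hfin : volume A * ENNReal.ofReal (2 * π) < ⊤ := ENNReal.mul_lt_top hAfin ENNReal.ofReal_lt_top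
  have hangfin : ∀ s, ang A B s < ⊤ := fun s => (ang_lt_top B hAfin s).trans_lt hfin
  have hgb : ∀ s, ‖g s‖ ≤ (volume A * ENNReal.ofReal (2 * π)).toReal := by
    intro s
    rw [hgs, Real.norm_of_nonneg ENNReal.toReal_nonneg]
    exact ENNReal.toReal_mono hfin.ne (ang_lt_top B hAfin s)
  have hmeas : Measurable (fun s => s * g s) := measurable_id.mul hgm
  have hFr : ∀ r, 0 < r → F r = (∫ s in (0:ℝ)..r, s * g s) /
      ((volume A).toReal * (volume B).toReal) := by
    intro r hr
    rw [hF, prod_measure_polar hAm hBm, intervalIntegral.integral_of_le hr.le,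
      integral_Ioc_eq_integral_Ioo, ← integral_toReal]
    · congr 1
      refine setIntegral_congr_fun measurableSet_Ioo fun s hs => ?_
      simp only [ENNReal.toReal_mul, ENNReal.toReal_ofReal hs.1.le, hgs]
    · exact (ENNReal.measurable_ofReal.mul (measurable_ang hAm hBm)).aemeasurable
    · exact Filter.Eventually.of_forall fun s => ENNReal.mul_lt_top ENNReal.ofReal_lt_top (hangfin s)
  have hint : IntervalIntegrable (fun s => s * g s) volume 0 r₀ := by
    refine IntervalIntegrable.continuousOn_mul ?_ continuousOn_id
    rw [intervalIntegrable_iff]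
    exact Measure.integrableOn_of_bounded (by simp) hgm.aestronglyMeasurable
      (Filter.Eventually.of_forall hgb)
  have hd := intervalIntegral.integral_hasDerivAt_right hint
    (hmeas.stronglyMeasurable.stronglyMeasurableAtFilter) (continuousAt_id.mul hcont)
  refine (hd.div_const _).congr_of_eventuallyEq ?_
  filter_upwards [lt_mem_nhds hr₀] with r hr
  exact hFr r hr
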